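/- The complexified operator Cα − iωDα is invertible, and the tensor of complex viscoelastic moduli C(ω) := (Cε − iωDε) − (Cm − iωDm)∘(Cα − iωDα)⁻¹∘(Cm − iωDm) admits the alternative representation C(ω) = C_I − iωD_I − Ĉᵀ∘(Cα − iωDα)⁻¹∘Ĉ. -/

import Mathlib

open scoped ComplexInnerProductSpace

section Defs

variable {V : Type*} [NormedAddCommGroup V] [InnerProductSpace ℂ V] [FiniteDimensional ℂ V]

/-- `Ĉ := Cm − Cα ∘ Dα⁻¹ ∘ Dm`. -/
noncomputable def Chat (Cα Cm Dα Dm : V →L[ℂ] V) : V →L[ℂ] V :=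
  Cm - Cα ∘L Ring.inverse Dα ∘L Dm

/-- The instantaneous elasticity tensor `C_I := Cε − Cm∘Cα⁻¹∘Cm + Ĉᵀ∘Cα⁻¹∘Ĉ`. -/
noncomputable def CInst (Cε Cα Cm Dα Dm : V →L[ℂ] V) : V →L[ℂ] V :=
  Cε - Cm ∘L Ring.inverse Cα ∘L Cm +
    ContinuousLinearMap.adjoint (Chat Cα Cm Dα Dm) ∘L Ring.inverse Cα ∘L Chat Cα Cm Dα Dm

/-- The instantaneous viscosity tensor `D_I := Dε − Dm∘Dα⁻¹∘Dm`. -/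
noncomputable def DInst (Dε Dα Dm : V →L[ℂ] V) : V →L[ℂ] V :=
  Dε - Dm ∘L Ring.inverse Dα ∘L Dm

/-- The tensor of complex viscoelastic moduli
`C(ω) := (Cε − iωDε) − (Cm − iωDm)∘(Cα − iωDα)⁻¹∘(Cm − iωDm)`. -/
noncomputable def Cfreq (Cε Cα Cm Dε Dα Dm : V →L[ℂ] V) (ω : ℝ) : V →L[ℂ] V :=
  (Cε - (Complex.I * (ω : ℂ)) • Dε) -
    (Cm - (Complex.I * (ω : ℂ)) • Dm) ∘L
      Ring.inverse (Cα - (Complex.I * (ω : ℂ)) • Dα) ∘L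
        (Cm - (Complex.I * (ω : ℂ)) • Dm)

end Defs

/-!
`C(ω)` is the Schur complement of the lower right block in the pencil `C - iωD` of block matrices
`C = [Cε, Cm; Cm, Cα]` and `D = [Dε, Dm; Dm, Dα]`. Schur complements do not change when multiples
of the last row and column are added to the first ones. Doing so with `Dm Dα⁻¹` and `Dα⁻¹ Dm` makes
`D` block diagonal with upper left block `D_I`, and gives `C` the off-diagonal blocks `Ĉᵀ` and `Ĉ`.
Its upper left block must then be `C_I`, as the Schur complement of `C` itself has not changed
either.

The operator `Cα - iωDα` has strictly positive real part `c = Cα`, and every such operator `c + id`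
is invertible: it is `√c (1 + ih) √c` with `h = √c⁻¹ d √c⁻¹` self-adjoint, and the spectrum of `h`
is real.
-/

open scoped ComplexStarModule Ring

/-- The Schur complement `a - b d⁻¹ c` of the block matrix `[a, b; c, d]` over a ring. The inverse
is `Ring.inverse d`, hence `0` when `d` is not a unit. -/
noncomputable def schurComplement {R : Type*} [Ring R] (a b c d : R) : R :=
  a - b * (d⁻¹ʳ * c)

/-- The block `c - d d'⁻¹ c'` that is left of `c - z c'` in the pencil `[c - z c'; d - z d']` once
the coefficient `c'` of `z` has been eliminated with `d'`. For the blocks of the complex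
viscoelastic moduli it is `Ĉ`. The inverse is again `Ring.inverse d'`. -/
noncomputable def reducedBlock {R : Type*} [Ring R] (d c d' c' : R) : R :=
  c - d * (d'⁻¹ʳ * c')

section Ring

variable {R : Type*} [Ring R]

theorem schurComplement_shear {d : R} (hd : IsUnit d) (a b c p q : R) :
    schurComplement (a - p * c - b * q + p * d * q) (b - p * d) (c - d * q) d =
      schurComplement a b c d := by
  have hcorner : (b - p * d) * (d⁻¹ʳ * (c - d * q)) =
      b * (d⁻¹ʳ * c) - p * c - b * q + p * d * q := by
    calc (b - p * d) * (d⁻¹ʳ * (c - d * q))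
        = b * (d⁻¹ʳ * c) - p * (d * (d⁻¹ʳ * c)) - b * (d⁻¹ʳ * (d * q)) +
            p * (d * (d⁻¹ʳ * (d * q))) := by noncomm_ring
      _ = b * (d⁻¹ʳ * c) - p * c - b * q + p * d * q := by
        simp only [Ring.mul_inverse_cancel_left _ _ hd, Ring.inverse_mul_cancel_left _ _ hd,
          mul_assoc]
  rw [schurComplement, schurComplement, hcorner]
  abel

theorem schurComplement_sub_smul {k : Type*} [CommSemiring k] [Algebra k R] {d d' : R}
    (hd : IsUnit d) (hd' : IsUnit d') (a b c a' b' c' : R) {z : k} (hz : IsUnit (d - z • d')) :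
    schurComplement (a - z • a') (b - z • b') (c - z • c') (d - z • d') =
      schurComplement
        (schurComplement a b c d +
            (b - b' * (d'⁻¹ʳ * d)) * (d⁻¹ʳ * reducedBlock d c d' c') -
          z • schurComplement a' b' c' d')
        (b - b' * (d'⁻¹ʳ * d)) (reducedBlock d c d' c') (d - z • d') := by
  set p := b' * d'⁻¹ʳ with hp
  set q := d'⁻¹ʳ * c' with hq
  have hpd : p * d' = b' := Ring.inverse_mul_cancel_right _ _ hd'
  have hdq : d' * q = c' := Ring.mul_inverse_cancel_left _ _ hd'
  have hb : b - b' * (d'⁻¹ʳ * d) = b - p * d := by rw [hp, mul_assoc]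
  have hbz : b - z • b' - p * (d - z • d') = b - p * d := by
    rw [mul_sub, mul_smul_comm, hpd]
    abel
  have hcz : c - z • c' - (d - z • d') * q = c - d * q := by
    rw [sub_mul, smul_mul_assoc, hdq]
    abel
  have hstatic : a - p * c - b * q + p * d * q =
      schurComplement a b c d + (b - p * d) * (d⁻¹ʳ * (c - d * q)) :=
    sub_eq_iff_eq_add.mp (schurComplement_shear hd a b c p q)
  have hcorner : a - z • a' - p * (c - z • c') - (b - z • b') * q + p * (d - z • d') * q =
      a - p * c - b * q + p * d * q - z • schurComplement a' b' c' d' := by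
    have hpc : p * c' = b' * q := by rw [← hdq, ← mul_assoc, hpd]
    simp only [schurComplement, ← hq, mul_sub, sub_mul, smul_sub, mul_smul_comm, smul_mul_assoc,
      hpd, hpc]
    abel
  rw [← schurComplement_shear hz _ _ _ p q, hbz, hcz, hcorner, hstatic, hb, reducedBlock]

theorem star_reducedBlock [StarRing R] {d d' : R} (hd : IsSelfAdjoint d) (hd' : IsSelfAdjoint d')
    (c c' : R) : star (reducedBlock d c d' c') = star c - star c' * (d'⁻¹ʳ * d) := by
  rw [reducedBlock, star_sub, star_mul, star_mul, ← Ring.inverse_star, hd.star_eq, hd'.star_eq,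
    mul_assoc]

end Ring

theorem realPart_sub_I_mul_smul {A : Type*} [AddCommGroup A] [Module ℂ A] [StarAddMonoid A]
    [StarModule ℂ A] {c d : A} (hc : IsSelfAdjoint c) (hd : IsSelfAdjoint d) (ω : ℝ) :
    (ℜ (c - (Complex.I * (ω : ℂ)) • d) : A) = c := by
  simp [realPart_smul, hc.coe_realPart, hd.imaginaryPart]

section CStarAlgebra

variable {A : Type*} [CStarAlgebra A]

theorem isUnit_one_add_I_smul {h : A} (hh : IsSelfAdjoint h) : IsUnit (1 + Complex.I • h) := by
  have hI : Complex.I ∉ spectrum ℂ h := fun hmem ↦ by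
    simpa using hh.im_eq_zero_of_mem_spectrum hmem
  have hunit : IsUnit (algebraMap ℂ A Complex.I - h) := spectrum.notMem_iff.mp hI
  have hfactor : 1 + Complex.I • h = -(Complex.I • (algebraMap ℂ A Complex.I - h)) := by
    rw [Algebra.algebraMap_eq_smul_one, smul_sub, smul_smul, Complex.I_mul_I]
    module
  rw [hfactor]
  exact (hunit.smul (Units.mk0 _ Complex.I_ne_zero)).neg

theorem isUnit_of_isStrictlyPositive_realPart [PartialOrder A] [StarOrderedRing A] {a : A}
    (ha : IsStrictlyPositive (ℜ a : A)) : IsUnit a := by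
  set c : A := ↑(ℜ a)
  set h : A := CFC.conjSqrt c⁻¹ʳ (ℑ a)
  have hh : IsSelfAdjoint h :=
    (ℑ a).2.conjugate_self (CFC.sqrt_nonneg _).isSelfAdjoint
  have hfactor : a = CFC.sqrt c * (1 + Complex.I • h) * CFC.sqrt c := by
    calc a = c + Complex.I • (ℑ a : A) := (realPart_add_I_smul_imaginaryPart a).symm
      _ = CFC.conjSqrt c 1 + Complex.I • CFC.conjSqrt c h := by
        rw [CFC.conjSqrt_one c ha.nonneg, CFC.conjSqrt_conjSqrt_ringInverse c _ ha]
      _ = CFC.sqrt c * (1 + Complex.I • h) * CFC.sqrt c := by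
        simp only [CFC.conjSqrt_apply, mul_add, add_mul, mul_smul_comm, smul_mul_assoc]
  have hsqrt : IsUnit (CFC.sqrt c) := ha.isUnit_cfcSqrt
  rw [hfactor]
  exact (hsqrt.mul (isUnit_one_add_I_smul hh)).mul hsqrt

end CStarAlgebra

theorem isStrictlyPositive_of_re_inner_pos {𝕜 V : Type*} [RCLike 𝕜] [NormedAddCommGroup V]
    [InnerProductSpace 𝕜 V] [FiniteDimensional 𝕜 V] {T : V →L[𝕜] V}
    (hT : (T : V →ₗ[𝕜] V).IsSymmetric) (hpos : ∀ x : V, x ≠ 0 → 0 < RCLike.re (inner 𝕜 (T x) x)) :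
    IsStrictlyPositive T := by
  have hnonneg : 0 ≤ T := by
    rw [ContinuousLinearMap.nonneg_iff_isPositive]
    refine ⟨hT, fun x ↦ ?_⟩
    obtain rfl | hx := eq_or_ne x 0
    · simp [ContinuousLinearMap.reApplyInnerSelf]
    · exact (hpos x hx).le
  have hinj : Function.Injective (T : V →ₗ[𝕜] V) := by
    refine (injective_iff_map_eq_zero _).mpr fun x hx ↦ ?_
    by_contra hne
    simpa [show T x = 0 from hx] using hpos x hne
  have : CompleteSpace V := FiniteDimensional.complete 𝕜 V
  have hunit : IsUnit T := ContinuousLinearMap.isUnit_iff_bijective.mpr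
    ⟨hinj, LinearMap.injective_iff_surjective.mp hinj⟩
  exact hunit.isStrictlyPositive hnonneg

theorem stmt13_general {A : Type*} [CStarAlgebra A] [PartialOrder A] [StarOrderedRing A]
    (cε dε : A) {cα cm dα dm : A} (hcα : IsStrictlyPositive cα) (hcm : IsSelfAdjoint cm)
    (hdα : IsSelfAdjoint dα) (hdα_unit : IsUnit dα) (hdm : IsSelfAdjoint dm) (ω : ℝ) :
    IsUnit (cα - (Complex.I * (ω : ℂ)) • dα) ∧
      schurComplement (cε - (Complex.I * (ω : ℂ)) • dε) (cm - (Complex.I * (ω : ℂ)) • dm)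
          (cm - (Complex.I * (ω : ℂ)) • dm) (cα - (Complex.I * (ω : ℂ)) • dα) =
        schurComplement
          (schurComplement cε cm cm cα +
              star (reducedBlock cα cm dα dm) * (cα⁻¹ʳ * reducedBlock cα cm dα dm) -
            (Complex.I * (ω : ℂ)) • schurComplement dε dm dm dα)
          (star (reducedBlock cα cm dα dm)) (reducedBlock cα cm dα dm)
          (cα - (Complex.I * (ω : ℂ)) • dα) := by
  have hunit : IsUnit (cα - (Complex.I * (ω : ℂ)) • dα) := by
    apply isUnit_of_isStrictlyPositive_realPart
    rwa [realPart_sub_I_mul_smul hcα.isSelfAdjoint hdα]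
  refine ⟨hunit, ?_⟩
  rw [star_reducedBlock hcα.isSelfAdjoint hdα, hcm.star_eq, hdm.star_eq]
  exact schurComplement_sub_smul hcα.isUnit hdα_unit cε cm cm dε dm dm hunit

theorem stmt13 {V : Type*} [NormedAddCommGroup V] [InnerProductSpace ℂ V]
    [FiniteDimensional ℂ V]
    (Cε Cα Cm Dε Dα Dm : V →L[ℂ] V)
    (hCε : IsSelfAdjoint Cε) (hCα : IsSelfAdjoint Cα) (hCm : IsSelfAdjoint Cm)
    (hDε : IsSelfAdjoint Dε) (hDα : IsSelfAdjoint Dα) (hDm : IsSelfAdjoint Dm)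
    (hCαpos : ∀ x : V, x ≠ 0 → 0 < (⟪Cα x, x⟫).re)
    (hDαpos : ∀ x : V, x ≠ 0 → 0 < (⟪Dα x, x⟫).re)
    (ω : ℝ) :
    IsUnit (Cα - (Complex.I * (ω : ℂ)) • Dα) ∧
      Cfreq Cε Cα Cm Dε Dα Dm ω =
        CInst Cε Cα Cm Dα Dm - (Complex.I * (ω : ℂ)) • DInst Dε Dα Dm -
          ContinuousLinearMap.adjoint (Chat Cα Cm Dα Dm) ∘L
            Ring.inverse (Cα - (Complex.I * (ω : ℂ)) • Dα) ∘L Chat Cα Cm Dα Dm :=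
  -- In `V →L[ℂ] V`, product and `star` unfold to composition and adjoint.
  stmt13_general Cε Dε (isStrictlyPositive_of_re_inner_pos hCα.isSymmetric hCαpos) hCm hDα
    (isStrictlyPositive_of_re_inner_pos hDα.isSymmetric hDαpos).isUnit hDm ω
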